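/- (Helffer–Sjöstrand formula) Let f ∈ C^{k+1}(ℝ) with compact support, k ≥ 1, and M a Hermitian matrix. Then f(M) = (1/π) ∫_ℂ ∂̄F_k(f)(z) (M − zI)^{-1} d²z, where F_k(f) is the almost analytic extension F_k(f)(x+iy) = Σ_{l=0}^k ((iy)^l/l!) f^{(l)}(x) χ(y) with χ smooth, compactly supported, ≡1 near 0, and d²z is Lebesgue measure on ℂ. -/

import Mathlib

open Matrix MeasureTheory

/-- The Cauchy–Riemann operator `∂̄ = (1/2)(∂_x + i ∂_y)` applied to `F : ℂ → ℂ`. -/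
noncomputable def dbar (F : ℂ → ℂ) (z : ℂ) : ℂ :=
  (1 / 2) * (fderiv ℝ F z 1 + Complex.I * fderiv ℝ F z Complex.I)

/-- Spectral functional calculus: `f(M) = Σᵢ f(λᵢ) vᵢ vᵢ*` for a Hermitian `M`. -/
noncomputable def funcCalc {N : ℕ} {M : Matrix (Fin N) (Fin N) ℂ}
    (hM : M.IsHermitian) (f : ℝ → ℂ) : Matrix (Fin N) (Fin N) ℂ :=
  ∑ i, f (hM.eigenvalues i) •
    vecMulVec (fun a => hM.eigenvectorBasis i a)
      (fun b => (starRingEnd ℂ) (hM.eigenvectorBasis i b))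

noncomputable def circ (t : ℝ) : ℂ := (Real.cos t : ℂ) + (Real.sin t : ℂ) * Complex.I

lemma circ_hasDerivAt (t : ℝ) : HasDerivAt circ (Complex.I * circ t) t := by
  have h1 := (Real.hasDerivAt_cos t).ofReal_comp
  have h2 := ((Real.hasDerivAt_sin t).ofReal_comp).mul_const Complex.I
  have := h1.add h2
  convert! this using 1
  unfold circ
  push_cast
  linear_combination (Complex.sin t) * Complex.I_mul_I

lemma circ_continuous : Continuous circ :=
  continuous_iff_continuousAt.2 fun t => (circ_hasDerivAt t).continuousAt

lemma circ_norm (t : ℝ) : ‖circ t‖ = 1 := by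
  unfold circ
  push_cast
  exact Complex.norm_cos_add_sin_mul_I t

lemma dbar_circ (G : ℂ → ℂ) (z : ℂ) (t : ℝ) :
    dbar G z = circ t * ((1 / 2) * (fderiv ℝ G z (circ t) +
      Complex.I * fderiv ℝ G z (Complex.I * circ t))) := by
  have h1 : fderiv ℝ G z (circ t) = (Real.cos t : ℂ) * fderiv ℝ G z 1 +
      (Real.sin t : ℂ) * fderiv ℝ G z Complex.I := by
    have : circ t = (Real.cos t) • (1 : ℂ) + (Real.sin t) • Complex.I := by
      simp [circ]
    rw [this, map_add, map_smul, map_smul]; simp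
  have h2 : fderiv ℝ G z (Complex.I * circ t) = -(Real.sin t : ℂ) * fderiv ℝ G z 1 +
      (Real.cos t : ℂ) * fderiv ℝ G z Complex.I := by
    have : Complex.I * circ t = (-Real.sin t) • (1 : ℂ) + (Real.cos t) • Complex.I := by
      simp only [circ, Complex.real_smul]
      push_cast
      linear_combination (Complex.sin t) * Complex.I_mul_I
    rw [this, map_add, map_smul, map_smul]; simp
  have h3 : (Real.cos t : ℂ) ^ 2 + (Real.sin t : ℂ) ^ 2 = 1 := by
    exact_mod_cast Real.cos_sq_add_sin_sq t
  rw [h1, h2]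
  unfold dbar circ
  set c := (Real.cos t : ℂ)
  set s := (Real.sin t : ℂ)
  set A := fderiv ℝ G z 1
  set B := fderiv ℝ G z Complex.I
  linear_combination (-(1/2) * (A + Complex.I * B)) * h3 +
    (s * s / 2 * A  - (s*c/2) * B + 0 * B) * Complex.I_mul_I

lemma integrable_dbar_div (G : ℂ → ℂ) (hG : ContDiff ℝ 1 G) (hGc : HasCompactSupport G)
    (a : ℂ) : Integrable (fun z => dbar G z * (a - z)⁻¹) := by
  have hcont : Continuous (dbar G) := by
    have := hG.continuous_fderiv one_ne_zero
    unfold dbar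
    fun_prop
  have hs : HasCompactSupport (dbar G) := by
    have h1 : HasCompactSupport (fderiv ℝ G) := hGc.fderiv ℝ
    refine h1.mono ?_
    intro z hz h
    apply hz
    simp only [dbar, h]
    simp
  obtain ⟨C, hC⟩ := hcont.bounded_above_of_compact_support hs
  obtain ⟨R, hR⟩ := hs.isCompact.isBounded.subset_ball a
  have hball : IntegrableOn (fun z : ℂ => ‖z‖⁻¹) (Metric.ball 0 R) := by
    rw [integrableOn_fun_norm_addHaar volume (f := fun y : ℝ => y⁻¹)]
    have : IntegrableOn (fun _ : ℝ => (1:ℝ)) (Set.Ioo 0 R) := by simp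
    refine this.congr_fun ?_ measurableSet_Ioo
    intro x hx
    simp [Complex.finrank_real_complex, mul_inv_cancel₀ hx.1.ne']
  have hI := (integrable_indicator_iff measurableSet_ball).2 hball
  have hI2 := (hI.comp_sub_left a).const_mul C
  refine hI2.mono' ?_ ?_
  · refine (hcont.measurable.mul ?_).aestronglyMeasurable
    fun_prop
  · refine Filter.Eventually.of_forall fun z => ?_
    rw [norm_mul, norm_inv]
    by_cases hz : z ∈ Metric.ball a R
    · rw [Set.indicator_of_mem]
      · gcongr
        exact hC z
      · simpa [dist_comm, ← dist_eq_norm] using hz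
    · rw [Set.indicator_of_notMem]
      · have : dbar G z = 0 := by
          by_contra h
          exact hz (hR (subset_tsupport _ h))
        simp [this]
      · simpa [dist_comm, ← dist_eq_norm] using hz

lemma cauchy_pompeiu_zero (G : ℂ → ℂ) (hG : ContDiff ℝ 1 G) (hGc : HasCompactSupport G) :
    ∫ z, dbar G z * (-z)⁻¹ = Real.pi * G 0 := by
  have hfc := hG.continuous_fderiv one_ne_zero
  have hcc := circ_continuous
  have hd : ∀ z, HasFDerivAt G (fderiv ℝ G z) z :=
    fun z => (hG.differentiable one_ne_zero z).hasFDerivAt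
  obtain ⟨R, hR⟩ := hGc.isCompact.isBounded.subset_closedBall 0
  have hR0 : ∀ z, R < ‖z‖ → fderiv ℝ G z = 0 := by
    intro z hz
    by_contra h
    have := hR (tsupport_fderiv_subset ℝ (subset_tsupport _ h))
    simp at this
    linarith
  have hRG : ∀ z, R < ‖z‖ → G z = 0 := by
    intro z hz
    by_contra h
    have := hR (subset_tsupport _ h)
    simp at this
    linarith
  set A : ℝ × ℝ → ℂ := fun p => fderiv ℝ G (p.1 * circ p.2) (circ p.2) with hA
  set B : ℝ × ℝ → ℂ := fun p => fderiv ℝ G (p.1 * circ p.2) (Complex.I * circ p.2) with hB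
  have hAc : Continuous A := by
    simp only [hA]; fun_prop
  have hBc : Continuous B := by
    simp only [hB]; fun_prop
  have key : ∀ K : ℝ × ℝ → ℂ, Continuous K → (∀ p, R < p.1 → 0 < p.1 → K p = 0) →
      IntegrableOn K (Set.Ioi (0:ℝ) ×ˢ Set.Ioo (-Real.pi) Real.pi) := by
    intro K hK hK0
    have h1 : IntegrableOn K (Set.Icc (0:ℝ) R ×ˢ Set.Icc (-Real.pi) Real.pi) :=
      hK.continuousOn.integrableOn_compact (isCompact_Icc.prod isCompact_Icc)
    refine h1.of_forall_sdiff_eq_zero (measurableSet_Ioi.prod measurableSet_Ioo) ?_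
    rintro ⟨r, t⟩ ⟨⟨hr, ht⟩, hn⟩
    refine hK0 _ ?_ hr
    by_contra h
    exact hn ⟨⟨le_of_lt hr, not_lt.1 h⟩, ⟨ht.1.le, ht.2.le⟩⟩
  have hn : ∀ r t : ℝ, 0 < r → ‖(r : ℂ) * circ t‖ = r := by
    intro r t hr
    rw [norm_mul, circ_norm]; simp [abs_of_pos hr]
  have hA0 : ∀ p : ℝ × ℝ, R < p.1 → 0 < p.1 → A p = 0 := by
    intro p h1 h2
    simp only [hA]
    rw [hR0 _ (by rw [hn _ _ h2]; exact h1)]; simp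
  have hB0 : ∀ p : ℝ × ℝ, R < p.1 → 0 < p.1 → B p = 0 := by
    intro p h1 h2
    simp only [hB]
    rw [hR0 _ (by rw [hn _ _ h2]; exact h1)]; simp
  have hAi := key A hAc hA0
  have hBi := key B hBc hB0
  have hAint : ∫ p in Set.Ioi (0:ℝ) ×ˢ Set.Ioo (-Real.pi) Real.pi, A p = - (2 * Real.pi) * G 0 := by
    have hAi' : IntegrableOn (fun q : ℝ × ℝ => A q.swap)
        (Set.Ioo (-Real.pi) Real.pi ×ˢ Set.Ioi (0:ℝ)) (volume.prod volume) := by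
      have h := hAi
      rw [IntegrableOn, Measure.volume_eq_prod, ← Measure.prod_restrict] at h
      rw [IntegrableOn, ← Measure.prod_restrict]
      exact h.swap
    rw [Measure.volume_eq_prod, ← setIntegral_prod_swap, setIntegral_prod _ hAi']
    have : ∀ t : ℝ, ∫ r in Set.Ioi (0:ℝ), A ((t, r) : ℝ × ℝ).swap = - G 0 := by
      intro t
      have h1 : ∀ r ∈ Set.Ici (0:ℝ), HasDerivAt (fun r : ℝ => G (r * circ t))
          (A ((t, r) : ℝ × ℝ).swap) r := by
        intro r _
        have := ((Complex.ofRealCLM.hasDerivAt (x := r)).mul_const (circ t))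
        have := (hd (r * circ t)).comp_hasDerivAt r this
        simpa [hA, Function.comp_def] using this
      have h2 : IntegrableOn (fun r => A ((t, r) : ℝ × ℝ).swap) (Set.Ioi 0) := by
        have hc : Continuous (fun r => A ((t, r) : ℝ × ℝ).swap) := by
          simp only [Prod.swap_prod_mk]; fun_prop
        have h3 : IntegrableOn (fun r => A ((t, r) : ℝ × ℝ).swap) (Set.Icc 0 R) :=
          hc.continuousOn.integrableOn_compact isCompact_Icc
        refine h3.of_forall_sdiff_eq_zero measurableSet_Ioi ?_
        rintro r ⟨hr, hn⟩
        refine hA0 _ ?_ hr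
        by_contra h
        exact hn ⟨le_of_lt hr, not_lt.1 h⟩
      have h3 : Filter.Tendsto (fun r : ℝ => G (r * circ t)) Filter.atTop (nhds 0) := by
        refine tendsto_const_nhds.congr' ?_
        filter_upwards [Filter.eventually_gt_atTop R, Filter.eventually_gt_atTop 0] with r h1 h2
        exact (hRG _ (by rw [hn _ _ h2]; exact h1)).symm
      rw [integral_Ioi_of_hasDerivAt_of_tendsto' h1 h2 h3]
      simp
    simp only [this]
    rw [setIntegral_const]
    simp [Real.pi_pos.le, measureReal_def]
    left
    ring
  have hBint : ∫ p in Set.Ioi (0:ℝ) ×ˢ Set.Ioo (-Real.pi) Real.pi, B p = 0 := by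
    rw [Measure.volume_eq_prod, setIntegral_prod _ hBi]
    rw [setIntegral_congr_fun (g := fun _ => (0:ℂ)) measurableSet_Ioi]
    · simp
    intro r (hr : 0 < r)
    show ∫ t in Set.Ioo (-Real.pi) Real.pi, B (r, t) = 0
    rw [← integral_Ioc_eq_integral_Ioo, ← intervalIntegral.integral_of_le
      (by linarith [Real.pi_pos])]
    have h1 : ∀ t ∈ Set.uIcc (-Real.pi) Real.pi, HasDerivAt
        (fun t : ℝ => (r : ℂ)⁻¹ * G (r * circ t)) (B (r, t)) t := by
      intro t _
      have h := (hd (r * circ t)).comp_hasDerivAt t ((circ_hasDerivAt t).const_mul (r : ℂ))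
      have h := h.const_mul ((r : ℂ)⁻¹)
      convert! h using 1
      rw [← Complex.real_smul (x := r) (z := Complex.I * circ t), map_smul, Complex.real_smul,
        ← mul_assoc, inv_mul_cancel₀ (by exact_mod_cast hr.ne'), one_mul]
    have hc : Continuous fun t => B (r, t) := by fun_prop
    rw [intervalIntegral.integral_eq_sub_of_hasDerivAt h1 (hc.intervalIntegrable _ _)]
    simp [circ]
  rw [← Complex.integral_comp_polarCoord_symm]
  have : ∫ p in polarCoord.target, p.1 • (dbar G (Complex.polarCoord.symm p) *
      (-Complex.polarCoord.symm p)⁻¹) =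
      ∫ p in Set.Ioi (0:ℝ) ×ˢ Set.Ioo (-Real.pi) Real.pi,
        (-(1/2) * A p + -(1/2) * Complex.I * B p) := by
    refine setIntegral_congr_fun (measurableSet_Ioi.prod measurableSet_Ioo) ?_
    rintro ⟨r, t⟩ ⟨hr, ht⟩
    have e : Complex.polarCoord.symm (r, t) = r * circ t := by
      simp [circ]
    have hr' : (r : ℂ) ≠ 0 := by exact_mod_cast (ne_of_gt hr)
    have hc0 : circ t ≠ 0 := by
      intro h; have := circ_norm t; simp [h] at this
    simp only [e]
    rw [dbar_circ G _ t]
    simp only [hA, hB, Complex.real_smul]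
    field_simp
    ring
  rw [this, integral_add (hAi.const_mul _) (hBi.const_mul _), integral_const_mul,
    integral_const_mul, hAint, hBint]
  ring

lemma cauchy_pompeiu (G : ℂ → ℂ) (hG : ContDiff ℝ 1 G) (hGc : HasCompactSupport G) (a : ℂ) :
    ∫ z, dbar G z * (a - z)⁻¹ = Real.pi * G a := by
  have h := cauchy_pompeiu_zero (fun z => G (z + a)) (by fun_prop)
    (hGc.comp_homeomorph (Homeomorph.addRight a))
  simp only [zero_add] at h
  rw [← h, ← integral_add_right_eq_self _ a]
  congr 1
  funext z
  simp only [dbar, fderiv_comp_add_right]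
  congr 2
  ring


lemma resolvent_entry {N : ℕ} {M : Matrix (Fin N) (Fin N) ℂ}
    (hM : M.IsHermitian) (z : ℂ) (hz : ∀ l, z ≠ hM.eigenvalues l) (i j : Fin N) :
    (M - z • (1 : Matrix (Fin N) (Fin N) ℂ))⁻¹ i j =
      ∑ l, ((hM.eigenvalues l : ℂ) - z)⁻¹ *
        (hM.eigenvectorBasis l i * (starRingEnd ℂ) (hM.eigenvectorBasis l j)) := by
  set U : Matrix (Fin N) (Fin N) ℂ := hM.eigenvectorUnitary.1 with hU
  have h1 : U * star U = 1 := Unitary.coe_mul_star_self _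
  have h2 : star U * U = 1 := Unitary.coe_star_mul_self _
  have h3 : M = U * diagonal (fun l => (hM.eigenvalues l : ℂ)) * star U := by
    have := hM.spectral_theorem
    rw [Unitary.conjStarAlgAut_apply] at this
    exact this
  have h4 : (M - z • (1 : Matrix (Fin N) (Fin N) ℂ)) =
      U * diagonal (fun l => (hM.eigenvalues l : ℂ) - z) * star U := by
    rw [← diagonal_sub, mul_sub, sub_mul, ← h3]
    congr 1
    rw [← smul_one_eq_diagonal]
    simp [h1]
  have h5 : (M - z • (1 : Matrix (Fin N) (Fin N) ℂ))⁻¹ =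
      U * diagonal (fun l => ((hM.eigenvalues l : ℂ) - z)⁻¹) * star U := by
    apply Matrix.inv_eq_right_inv
    rw [h4]
    calc _ = U * diagonal (fun l => (hM.eigenvalues l : ℂ) - z) * (star U * U) *
        diagonal (fun l => ((hM.eigenvalues l : ℂ) - z)⁻¹) * star U := by
          simp only [mul_assoc]
      _ = U * (diagonal (fun l => (hM.eigenvalues l : ℂ) - z) *
        diagonal (fun l => ((hM.eigenvalues l : ℂ) - z)⁻¹)) * star U := by
          rw [h2]; simp only [mul_assoc, mul_one]
      _ = 1 := by
        rw [diagonal_mul_diagonal]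
        have : (fun l => ((hM.eigenvalues l : ℂ) - z) * ((hM.eigenvalues l : ℂ) - z)⁻¹) = 1 := by
          funext l
          exact mul_inv_cancel₀ (sub_ne_zero.2 (hz l).symm)
        rw [this]
        simp [h1]
  rw [h5, Matrix.mul_apply]
  refine Finset.sum_congr rfl fun l _ => ?_
  rw [mul_diagonal, star_apply]
  have : ∀ i, U i l = hM.eigenvectorBasis l i := fun i => rfl
  rw [this, this]
  simp only [RCLike.star_def]
  ring


lemma iteratedDeriv_tsupport_subset (f : ℝ → ℂ) (l : ℕ) :
    tsupport (iteratedDeriv l f) ⊆ tsupport f := by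
  induction l with
  | zero => simp
  | succ n ih =>
    rw [iteratedDeriv_succ]
    exact (closure_minimal support_deriv_subset (isClosed_tsupport _)).trans ih

lemma extension_contDiff (k : ℕ)
    (f : ℝ → ℂ) (hf : ContDiff ℝ (k + 1 : ℕ) f)
    (χ : ℝ → ℝ) (hχ : ContDiff ℝ (⊤ : ℕ∞) χ) :
    ContDiff ℝ 1 (fun z : ℂ => ∑ l ∈ Finset.range (k + 1),
      ((Complex.I * z.im) ^ l / (Nat.factorial l : ℂ)) * iteratedDeriv l f z.re *
        (χ z.im : ℂ)) := by
  refine ContDiff.sum fun l hl => ?_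
  have hl' : l ≤ k := by simpa [Nat.lt_succ_iff] using hl
  have hre : ContDiff ℝ 1 Complex.re := Complex.reCLM.contDiff
  have him : ContDiff ℝ 1 Complex.im := Complex.imCLM.contDiff
  have hof : ContDiff ℝ 1 Complex.ofReal := Complex.ofRealCLM.contDiff
  have h1 : ContDiff ℝ 1 (iteratedDeriv l f) := by
    rw [iteratedDeriv_eq_iterate]
    refine ContDiff.iterate_deriv' 1 l (hf.of_le ?_)
    exact_mod_cast (by omega : 1 + l ≤ k + 1)
  have h2 : ContDiff ℝ 1 χ := hχ.of_le (by exact_mod_cast le_top)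
  exact (((contDiff_const.mul (hof.comp him)).pow l).div_const _ |>.mul (h1.comp hre)).mul
    (hof.comp (h2.comp him))

lemma extension_compact (k : ℕ)
    (f : ℝ → ℂ) (hfc : HasCompactSupport f)
    (χ : ℝ → ℝ) (hχc : HasCompactSupport χ) :
    HasCompactSupport (fun z : ℂ => ∑ l ∈ Finset.range (k + 1),
      ((Complex.I * z.im) ^ l / (Nat.factorial l : ℂ)) * iteratedDeriv l f z.re *
        (χ z.im : ℂ)) := by
  refine HasCompactSupport.intro (K := tsupport f ×ℂ tsupport χ)
    (hfc.isCompact.reProdIm hχc.isCompact) ?_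
  intro z hz
  refine Finset.sum_eq_zero fun l _ => ?_
  by_cases h : z.im ∈ tsupport χ
  · have h' : z.re ∉ tsupport f := fun h' => hz ⟨h', h⟩
    have : iteratedDeriv l f z.re = 0 := by
      by_contra h0
      exact h' (iteratedDeriv_tsupport_subset f l (subset_tsupport _ h0))
    simp [this]
  · simp [image_eq_zero_of_notMem_tsupport h]

/-- Helffer–Sjöstrand formula: for `f ∈ C^{k+1}(ℝ)` compactly supported, `k ≥ 1`, and
`M` Hermitian, `f(M) = (1/π) ∫_ℂ ∂̄ F_k(f)(z) (M − z)⁻¹ d²z`, where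
`F_k(f)(x+iy) = Σ_{l ≤ k} ((iy)^l/l!) f^{(l)}(x) χ(y)` is the almost analytic
extension of `f`. -/
theorem helffer_sjostrand (k : ℕ) (hk : 1 ≤ k)
    (f : ℝ → ℂ) (hf : ContDiff ℝ (k + 1 : ℕ) f) (hfc : HasCompactSupport f)
    (χ : ℝ → ℝ) (hχ : ContDiff ℝ (⊤ : ℕ∞) χ) (hχc : HasCompactSupport χ)
    (hχ1 : ∀ᶠ y in nhds (0 : ℝ), χ y = 1)
    (F : ℂ → ℂ)
    (hF : F = fun z => ∑ l ∈ Finset.range (k + 1),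
      ((Complex.I * z.im) ^ l / (Nat.factorial l : ℂ)) * iteratedDeriv l f z.re *
        (χ z.im : ℂ))
    (N : ℕ) (M : Matrix (Fin N) (Fin N) ℂ) (hM : M.IsHermitian) :
    ∀ i j, funcCalc hM f i j =
      (1 / Real.pi : ℂ) *
        ∫ z : ℂ, dbar F z * ((M - z • (1 : Matrix (Fin N) (Fin N) ℂ))⁻¹ i j) := by
  intro i j
  have hF1 : ContDiff ℝ 1 F := hF ▸ extension_contDiff k f hf χ hχ
  have hF2 : HasCompactSupport F := hF ▸ extension_compact k f hfc χ hχc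
  have hFr : ∀ x : ℝ, F x = f x := by
    intro x
    have h1 : χ 0 = 1 := hχ1.self_of_nhds
    rw [hF]
    simp only [Complex.ofReal_im, Complex.ofReal_re, h1]
    rw [Finset.sum_eq_single 0]
    · simp
    · intro l _ hl
      simp [hl]
    · simp
  have hae : ∀ᵐ z : ℂ, dbar F z * ((M - z • (1 : Matrix (Fin N) (Fin N) ℂ))⁻¹ i j) =
      ∑ l, (dbar F z * ((hM.eigenvalues l : ℂ) - z)⁻¹) *
        (hM.eigenvectorBasis l i * (starRingEnd ℂ) (hM.eigenvectorBasis l j)) := by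
    have h0 : ∀ᵐ z : ℂ, ∀ l, z ≠ hM.eigenvalues l := by
      rw [ae_all_iff]
      intro l
      exact Measure.ae_ne volume _
    filter_upwards [h0] with z hz
    rw [resolvent_entry hM z hz, Finset.mul_sum]
    exact Finset.sum_congr rfl fun l _ => by ring
  rw [integral_congr_ae hae, integral_finsetSum _
    (fun l _ => (integrable_dbar_div F hF1 hF2 _).mul_const _)]
  simp only [integral_mul_const, cauchy_pompeiu F hF1 hF2, hFr]
  rw [funcCalc, Matrix.sum_apply, Finset.mul_sum]
  refine Finset.sum_congr rfl fun l _ => ?_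
  have hpi : (Real.pi : ℂ) ≠ 0 := by exact_mod_cast Real.pi_ne_zero
  simp only [Matrix.smul_apply, vecMulVec_apply, smul_eq_mul]
  field_simp
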